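/- Let k ≥ 2 and let w be a nonempty word over Σ_k with w ∉ {0}* ∪ {k−1}*, let s = s_{k,w}, and fix n ≥ 1. Then for all N ≥ ⌈log_k(n)⌉ + 2, P_s^{(1)}(n,N) = P_s^{(1)}(n, ⌈log_k(n)⌉ + 1) and P_s^{(1)}(n,N) ≥ 1. -/

import Mathlib

/-!
Let `ℓ = p + 1` be the length of `w`, `W` its value in base `k`, and `L = ⌈log_k n⌉`. Since `w` is
neither a power of `0` nor of `k - 1`, `0 < W < k ^ ℓ - 1`. The sequence `s` satisfies
`s m = s (m / k) + 1` when `m` ends with `w` (`Hit`) and `s m = s (m / k)` otherwise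
(`dseq_step`), so everything can be done arithmetically on numbers (`IsCount`).

The key is that adding `1` to all letters is a bijection from the factors with maximal letter `M`
to those with maximal letter `M + 1`, for every `M ≥ L + 1` (`IsCount.ncard_succ`). Suppose that all
indices of a window have a common prefix `β`. Occurrences of `w` ending below `β` depend only on the
last `ℓ - 1` digits of `β`, provided that `β` is long enough or `w` does not start with `0` (`Good`).
Moreover numbers with these last `ℓ - 1` digits realize every count `c ≥ 0`, because prepending
digits adds at most one occurrence at a time (`IsCount.realize`). Hence `s β` can be replaced by any
`c` in all letters simultaneously (`IsCount.shift`), and only two facts are needed: `β` is good when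
the window has a letter `≥ L + 1`, and `s β ≥ 1` when it has a letter `≥ L + 2`. Both are in
`IsCount.exists_prefix`.

If the window lies in one block of length `k ^ L`, at most `L` occurrences end below `β`. Otherwise
it meets two consecutive blocks `β c (k-1)^t` and `β (c+1) 0^t`. Again at most `L` occurrences end in
the last `L` digits, and at most one ends in `c (k-1)^t`, resp. `(c+1) 0^t`, because the run of equal
digits fixes the position of `w` (`hits_run_le_one`). This gives the bound `L + 1`. If `β` is not good,
the bound improves to `L` because the digit after the run may be counted together with the run
(`hits_run_succ_le_one`), while `s β = 0`; so no letter exceeds `L`.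
-/

/-- Number of occurrences of `w` as a contiguous factor of `y`
(number of starting positions `0 ≤ i ≤ |y|-1` where `w` occurs). -/
def occ (w y : List ℕ) : ℕ :=
  ((List.range y.length).filter (fun i => w.isPrefixOf (y.drop i))).length

/-- Base-`k` representation of `m`, most significant digit first, with `(0)_k = 0`. -/
def rep (k m : ℕ) : List ℕ := if m = 0 then [0] else (Nat.digits k m).reverse

/-- The `(k,w)`-digital sequence: number of occurrences of `w` in `(m)_k`. -/
def dseq (k : ℕ) (w : List ℕ) (m : ℕ) : ℕ := occ w (rep k m)

/-- The set of factors of length `n` of the sequence `a` all of whose letters are `≤ N`. -/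
def factorSet (a : ℕ → ℕ) (n N : ℕ) : Set (List ℕ) :=
  { u | (∃ i, u = (List.range n).map fun j => a (i + j)) ∧ ∀ x ∈ u, x ≤ N }

/-- The `N`-factor complexity `P_a(n,N)`. -/
noncomputable def Pc (a : ℕ → ℕ) (n N : ℕ) : ℕ := Nat.card (factorSet a n N)

/-- `F_a^{(1)}(n,N) = F_a(n,N) \ F_a(n,N-1)`. -/
def factorSet1 (a : ℕ → ℕ) (n N : ℕ) : Set (List ℕ) :=
  factorSet a n N \ factorSet a n (N - 1)

/-- First difference of the `N`-factor complexity in the variable `N`. -/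
noncomputable def Pc1 (a : ℕ → ℕ) (n N : ℕ) : ℤ := (Pc a n N : ℤ) - (Pc a n (N - 1) : ℤ)

/-- Second difference of the `N`-factor complexity in the variable `N`. -/
noncomputable def Pc2 (a : ℕ → ℕ) (n N : ℕ) : ℤ := Pc1 a n N - Pc1 a n (N - 1)

/-- The morphism `τ` on single letters: `τ(2i) = (2i)(2i+1)`, `τ(2i+1) = (2i+2)`. -/
def tauLetter (m : ℕ) : List ℕ := if m % 2 = 0 then [m, m + 1] else [m + 1]

/-- The morphism `τ` extended to finite words by concatenation. -/
def tauWord (u : List ℕ) : List ℕ := u.flatMap tauLetter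

/-- Fibonacci numbers with `F_0 = F_1 = 1`. -/
def fibW : ℕ → ℕ
  | 0 => 1
  | 1 => 1
  | n + 2 => fibW (n + 1) + fibW n

/-- `φ(n) = max {k : F_k < n}`. -/
noncomputable def phi (n : ℕ) : ℕ := sSup {k | fibW k < n}

/-- The infinite Fibonacci sequence `f = τ^∞(0)`: since `τ^{p}(0)` is a prefix of
`τ^{p+1}(0)` and `|τ^{n+1}(0)| = F_{n+2} > n`, the `n`-th letter of the fixed point is
the `n`-th letter of `τ^{n+1}(0)`. -/
def fibSeq (n : ℕ) : ℕ := (tauWord^[n + 1] [0]).getD n 0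

/-- The set of factors of length `n` of a finite word `u` all of whose letters are `≤ N`. -/
def factorSetW (u : List ℕ) (n N : ℕ) : Set (List ℕ) :=
  { v | v.length = n ∧ v <:+: u ∧ ∀ x ∈ v, x ≤ N }

/-! ### From lists of digits to arithmetic -/

theorem occ_cons (w : List ℕ) (x : ℕ) (y : List ℕ) :
    occ w (x :: y) = (if w <+: x :: y then 1 else 0) + occ w y := by
  unfold occ
  rw [List.length_cons, List.range_succ_eq_map, List.filter_cons, List.filter_map, List.drop_zero]
  have : ((fun i => w.isPrefixOf ((x :: y).drop i)) ∘ Nat.succ)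
      = fun i => w.isPrefixOf (y.drop i) := by
    funext i; simp
  rw [this]
  by_cases h : w <+: x :: y
  · simp [h, add_comm]
  · simp [h]

theorem occ_concat (w : List ℕ) (hw : w ≠ []) (y : List ℕ) (d : ℕ) :
    occ w (y ++ [d]) = occ w y + if w <:+ y ++ [d] then 1 else 0 := by
  induction y with
  | nil =>
    rw [List.nil_append, occ_cons]
    have : w <+: [d] ↔ w <:+ [d] := by
      constructor
      · intro h
        rcases List.prefix_cons_iff.1 h with h | ⟨t, rfl, ht⟩
        · exact absurd h hw
        · rw [List.prefix_nil.1 ht]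
      · intro h
        rcases List.suffix_cons_iff.1 h with h | h
        · rw [h]
        · exact absurd (List.suffix_nil.1 h) hw
    simp only [this]; ring
  | cons x y ih =>
    rw [List.cons_append, occ_cons, ih, occ_cons]
    have h1 : w <+: x :: (y ++ [d]) ↔ w = x :: (y ++ [d]) ∨ w <+: x :: y := by
      rw [← List.cons_append, List.prefix_concat_iff]
    have h2 : w <:+ x :: (y ++ [d]) ↔ w = x :: (y ++ [d]) ∨ w <:+ y ++ [d] :=
      List.suffix_cons_iff
    by_cases he : w = x :: (y ++ [d])
    · have h3 : ¬ w <+: x :: y := fun h => by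
        have := h.length_le; rw [he] at this; simp at this
      have h4 : ¬ w <:+ y ++ [d] := fun h => by
        have := h.length_le; rw [he] at this; simp at this
      rw [if_pos (h1.2 (Or.inl he)), if_pos (h2.2 (Or.inl he)), if_neg h3, if_neg h4]; ring
    · simp only [h1, h2, he, false_or]; ring

/-- `Hit k p W x` says that the base-`k` representation of `x` ends with the word of length `p + 1`
and value `W`; the inequality guarantees that this word does not use padding zeros. -/
def Hit (k p W x : ℕ) : Prop := x % k ^ (p + 1) = W ∧ k ^ p ≤ x

instance (k p W x : ℕ) : Decidable (Hit k p W x) := by unfold Hit; infer_instance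

theorem suffix_iff_hit (k : ℕ) (hk : 2 ≤ k) (w : List ℕ) (hwk : ∀ d ∈ w, d < k) (p : ℕ)
    (hp : w.length = p + 1) (m : ℕ) :
    w <:+ (Nat.digits k m).reverse ↔ Hit k p (Nat.ofDigits k w.reverse) m := by
  rw [← List.reverse_prefix, List.reverse_reverse]
  have hlen : w.reverse.length = p + 1 := by simpa using hp
  have hsz : k ^ p ≤ m ↔ p + 1 ≤ (Nat.digits k m).length := by
    have := Nat.digits_length_le_iff (b := k) (k := p) (by omega) m
    omega
  unfold Hit
  rw [hsz, List.prefix_iff_eq_take, hlen, Nat.self_mod_pow_eq_ofDigits_take (p + 1) m hk]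
  constructor
  · intro h
    refine ⟨by rw [← h], ?_⟩
    have := congrArg List.length h
    rw [hlen, List.length_take] at this
    omega
  · rintro ⟨h1, h2⟩
    refine (Nat.ofDigits_inj_of_len_eq (b := k) (by omega) ?_ ?_ ?_ h1).symm
    · rw [hlen, List.length_take]; omega
    · intro l hl
      exact Nat.digits_lt_base (by omega) (List.mem_of_mem_take hl)
    · intro l hl
      exact hwk l (by simpa using hl)

theorem ofDigits_pos_of_ne (k : ℕ) (hk : 2 ≤ k) (l : List ℕ) (h : ¬ ∀ d ∈ l, d = 0) :
    0 < Nat.ofDigits k l := by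
  induction l with
  | nil => simp at h
  | cons x l ih =>
    rw [Nat.ofDigits_cons]
    by_cases hx : x = 0
    · have := ih (fun h' => h (by simpa [hx] using h'))
      positivity
    · omega

theorem ofDigits_succ_lt_of_ne (k : ℕ) (hk : 2 ≤ k) (l : List ℕ) (hl : ∀ d ∈ l, d < k)
    (h : ¬ ∀ d ∈ l, d = k - 1) : Nat.ofDigits k l + 1 < k ^ l.length := by
  induction l with
  | nil => simp at h
  | cons x l ih =>
    rw [Nat.ofDigits_cons, List.length_cons, pow_succ]
    have hx : x < k := hl x (by simp)
    have hlt : Nat.ofDigits k l < k ^ l.length :=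
      Nat.ofDigits_lt_base_pow_length (by omega) (fun d hd => hl d (by simp [hd]))
    by_cases hx' : x = k - 1
    · have := ih (fun d hd => hl d (by simp [hd])) (fun h' => h (by simpa [hx'] using h'))
      nlinarith
    · have : x + 1 < k := by omega
      nlinarith

theorem dseq_zero (k : ℕ) (w : List ℕ) (hw : w ≠ []) (h0 : ¬ ∀ d ∈ w, d = 0) :
    dseq k w 0 = 0 := by
  unfold dseq rep
  rw [if_pos rfl, occ_cons]
  have : ¬ w <+: [0] := fun h => by
    rcases List.prefix_cons_iff.1 h with h | ⟨t, rfl, ht⟩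
    · exact hw h
    · rw [List.prefix_nil.1 ht] at h0; simp at h0
  rw [if_neg this]; simp [occ]

theorem dseq_step (k : ℕ) (hk : 2 ≤ k) (w : List ℕ) (hw : w ≠ []) (hwk : ∀ d ∈ w, d < k)
    (h0 : ¬ ∀ d ∈ w, d = 0) (p : ℕ) (hp : w.length = p + 1) (m : ℕ) :
    dseq k w m = dseq k w (m / k) + if Hit k p (Nat.ofDigits k w.reverse) m then 1 else 0 := by
  have hdig : ∀ x, dseq k w x = occ w (Nat.digits k x).reverse := by
    intro x
    by_cases hx : x = 0
    · subst hx; rw [dseq_zero k w hw h0]; simp [occ]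
    · unfold dseq rep; rw [if_neg hx]
  rw [hdig, hdig]
  simp only [← suffix_iff_hit k hk w hwk p hp m]
  by_cases hm : m = 0
  · subst hm; simp [hw]
  · rw [Nat.digits_def' (by omega) (by omega), List.reverse_cons, occ_concat w hw]

/-! ### Counting occurrences by arithmetic -/

/-- Number of occurrences in the base-`k` representation of `m` of the word of value `W` and length
`p + 1` that end at one of the `D` lowest positions. -/
def hits (k p W D m : ℕ) : ℕ := ((Finset.range D).filter fun t => Hit k p W (m / k ^ t)).card

theorem hits_le (k p W D m : ℕ) : hits k p W D m ≤ D := by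
  unfold hits
  exact (Finset.card_filter_le _ _).trans (by simp)

/-- The recurrence satisfied by the digital sequence of the word of value `W` and length `p + 1` when
`W ≠ 0`: dropping the last digit of `m` loses only the occurrence that ends there. -/
def IsCount (k p W : ℕ) (s : ℕ → ℕ) : Prop :=
  s 0 = 0 ∧ ∀ m, s m = s (m / k) + if Hit k p W m then 1 else 0

theorem IsCount.eq_add_hits {k p W : ℕ} {s : ℕ → ℕ} (hs : IsCount k p W s) (D m : ℕ) :
    s m = s (m / k ^ D) + hits k p W D m := by
  induction D with
  | zero => simp [hits]
  | succ D ih =>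
    have h : hits k p W (D + 1) m
        = hits k p W D m + if Hit k p W (m / k ^ D) then 1 else 0 := by
      unfold hits
      rw [Finset.range_add_one, Finset.filter_insert]
      split_ifs <;> simp
    rw [ih, h, hs.2 (m / k ^ D), Nat.div_div_eq_div_mul, ← pow_succ]; ring

theorem IsCount.eq_hits {k p W : ℕ} {s : ℕ → ℕ} (hs : IsCount k p W s) {D m : ℕ}
    (h : m < k ^ D) : s m = hits k p W D m := by
  rw [hs.eq_add_hits D m, Nat.div_eq_of_lt h, hs.1, zero_add]

theorem IsCount.eq_zero {k p W : ℕ} {s : ℕ → ℕ} (hs : IsCount k p W s) {x : ℕ}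
    (h : x < k ^ p) : s x = 0 := by
  rw [hs.eq_hits h]
  unfold hits
  rw [Finset.card_eq_zero, Finset.filter_eq_empty_iff]
  intro t _ ht
  have := Nat.div_le_self x (k ^ t)
  have := ht.2
  omega

/-- A prefix `β` is good if the occurrences of `w` that overlap it are not affected by padding with
zeros: either `w` starts with a nonzero digit, or `β` has at least `|w| - 1` digits. -/
def Good (k p W β : ℕ) : Prop := k ^ p ≤ W ∨ k ^ p ≤ k * β

/-! ### Replacing a common prefix -/

/-- Discrete intermediate values: extending a number by digits on the left adds at most one
occurrence at a time, so every count is attained with any prescribed `|w| - 1` last digits. -/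
theorem IsCount.realize {k p W : ℕ} {s : ℕ → ℕ} (hk : 2 ≤ k) (hs : IsCount k p W s)
    (hW : W < k ^ (p + 1)) (β j : ℕ) :
    ∃ β', β' % k ^ p = β % k ^ p ∧ s β' = j ∧ Good k p W β' := by
  have hk0 : ∀ e, 0 < k ^ e := fun e => Nat.pow_pos (by omega)
  -- a number with last digits those of `β`, preceded by at least `j` copies of `w`
  obtain ⟨Y, hY, hYj⟩ : ∃ Y, Y % k ^ p = β % k ^ p ∧
      ∀ i < j, Y / k ^ (p + (p + 1) * i) % k ^ (p + 1) = W := by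
    have hZ : ∀ j, ∃ Z, ∀ i < j, Z / k ^ ((p + 1) * i) % k ^ (p + 1) = W := by
      intro j
      induction j with
      | zero => exact ⟨0, fun i hi => absurd hi (by omega)⟩
      | succ j ih =>
        obtain ⟨Z, hZ⟩ := ih
        refine ⟨W + k ^ (p + 1) * Z, fun i hi => ?_⟩
        cases i with
        | zero => simp [Nat.mod_eq_of_lt hW]
        | succ i =>
          have he : (p + 1) * (i + 1) = (p + 1) + (p + 1) * i := by ring
          rw [he, pow_add k (p + 1) ((p + 1) * i), ← Nat.div_div_eq_div_mul,
            Nat.add_mul_div_left _ _ (hk0 _), Nat.div_eq_of_lt hW, zero_add]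
          exact hZ i (by omega)
    obtain ⟨Z, hZ⟩ := hZ j
    refine ⟨β % k ^ p + k ^ p * Z, by simp, fun i hi => ?_⟩
    rw [pow_add, ← Nat.div_div_eq_div_mul, Nat.add_mul_div_left _ _ (hk0 _),
      Nat.div_eq_of_lt (Nat.mod_lt _ (hk0 _)), zero_add]
    exact hZ i hi
  let S : ℕ → Finset ℕ := fun r =>
    (Finset.range r).filter fun t => Y / k ^ t % k ^ (p + 1) = W
  have hS0 : (S 0).card = 0 := by simp [S]
  have hSs : ∀ r, (S (r + 1)).card ≤ (S r).card + 1 := by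
    intro r
    simp only [S]
    rw [Finset.range_add_one, Finset.filter_insert]
    split_ifs
    · exact Finset.card_insert_le _ _
    · omega
  have hSj : ∃ r, j ≤ (S r).card := by
    refine ⟨p + (p + 1) * j, ?_⟩
    have : (Finset.range j).image (fun i => p + (p + 1) * i) ⊆ S (p + (p + 1) * j) := by
      intro x hx
      obtain ⟨i, hi, rfl⟩ := Finset.mem_image.1 hx
      have hi' := Finset.mem_range.1 hi
      refine Finset.mem_filter.2 ⟨Finset.mem_range.2 ?_, hYj i hi'⟩
      nlinarith
    calc j = ((Finset.range j).image (fun i => p + (p + 1) * i)).card := by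
            rw [Finset.card_image_of_injective, Finset.card_range]
            intro a b hab
            simpa using hab
      _ ≤ _ := Finset.card_le_card this
  obtain ⟨r, hr⟩ : ∃ r, (S r).card = j := by
    classical
    have h1 := Nat.find_spec hSj
    rcases hfind : Nat.find hSj with _ | r
    · rw [hfind] at h1; exact ⟨0, by omega⟩
    · rw [hfind] at h1
      have h2 := Nat.find_min hSj (m := r) (by omega)
      have h3 := hSs r
      exact ⟨r + 1, by omega⟩
  set y := Y % k ^ (p + r) with hy
  have hylt : y < k ^ (p + r) := Nat.mod_lt _ (hk0 _)
  have hymod : y % k ^ p = β % k ^ p := by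
    rw [hy, Nat.mod_mod_of_dvd _ (pow_dvd_pow _ (by omega)), hY]
  have hydiv : ∀ t < r, y / k ^ t % k ^ (p + 1) = Y / k ^ t % k ^ (p + 1) := by
    intro t ht
    have : k ^ (p + r) = k ^ t * k ^ (p + r - t) := by rw [← pow_add]; congr 1; omega
    rw [hy, this, Nat.mod_mul_right_div_self, Nat.mod_mod_of_dvd _ (pow_dvd_pow _ (by omega))]
  by_cases hc : k ^ p ≤ W
  · refine ⟨y, hymod, ?_, Or.inl hc⟩
    rw [hs.eq_hits hylt, ← hr]
    unfold hits
    congr 1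
    ext t
    simp only [S, Finset.mem_filter, Finset.mem_range]
    by_cases ht : t < r
    · rw [← hydiv t ht]
      refine ⟨fun h => ⟨ht, h.2.1⟩, fun h => ⟨by omega, h.2, ?_⟩⟩
      exact hc.trans (h.2 ▸ Nat.mod_le _ _)
    · refine ⟨fun h => ?_, fun h => absurd h.1 ht⟩
      have h1 : y / k ^ t < k ^ p := by
        rw [Nat.div_lt_iff_lt_mul (hk0 _), ← pow_add]
        exact hylt.trans_le (Nat.pow_le_pow_right (by omega) (by omega))
      exact absurd h.2.2 (by omega)
  · have hlt : k ^ (p + r) + y < k ^ (p + r + 1) := by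
      rw [pow_succ]; nlinarith
    refine ⟨k ^ (p + r) + y, ?_, ?_, Or.inr ?_⟩
    · rw [pow_add, Nat.mul_add_mod, hymod]
    · rw [hs.eq_hits hlt, ← hr]
      unfold hits
      congr 1
      ext t
      simp only [S, Finset.mem_filter, Finset.mem_range]
      have hsplit : ∀ t ≤ r, (k ^ (p + r) + y) / k ^ t = k ^ (p + r - t) + y / k ^ t := by
        intro t ht
        have : k ^ (p + r) = k ^ t * k ^ (p + r - t) := by rw [← pow_add]; congr 1; omega
        rw [this, Nat.mul_add_div (hk0 _)]
      rcases lt_trichotomy t r with ht | ht | ht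
      · have h1 : (k ^ (p + r) + y) / k ^ t % k ^ (p + 1) = Y / k ^ t % k ^ (p + 1) := by
          have : k ^ (p + r - t) = k ^ (p + 1) * k ^ (r - t - 1) := by
            rw [← pow_add]; congr 1; omega
          rw [hsplit t ht.le, this, Nat.mul_add_mod, hydiv t ht]
        unfold Hit
        rw [h1]
        refine ⟨fun h => ⟨ht, h.2.1⟩, fun h => ⟨by omega, h.2, ?_⟩⟩
        rw [hsplit t ht.le]
        exact (Nat.pow_le_pow_right (by omega) (by omega)).trans (Nat.le_add_right _ _)
      -- here the word starts with the leading digit `1`, whereas `w` starts with `0`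
      · refine ⟨fun h => ?_, fun h => by omega⟩
        exfalso
        have h2 := h.2.1
        have h3 : y / k ^ t < k ^ p := by
          rw [Nat.div_lt_iff_lt_mul (hk0 _), ← pow_add, ht]; exact hylt
        have h4 : p + r - t = p := by omega
        rw [hsplit t ht.le, h4, Nat.mod_eq_of_lt (by rw [pow_succ]; nlinarith)] at h2
        exact hc (h2 ▸ Nat.le_add_right _ _)
      · refine ⟨fun h => ?_, fun h => by omega⟩
        have h1 : (k ^ (p + r) + y) / k ^ t < k ^ p := by
          rw [Nat.div_lt_iff_lt_mul (hk0 _), ← pow_add]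
          exact hlt.trans_le (Nat.pow_le_pow_right (by omega) (by omega))
        exact absurd h.2.2 (by omega)
    · have : k ^ p ≤ k ^ (p + r) := Nat.pow_le_pow_right (by omega) (by omega)
      nlinarith

/-- Occurrences of `w` ending strictly below a good prefix only depend on the last `|w| - 1`
digits of that prefix. -/
theorem hits_congr {k p W : ℕ} (hk : 2 ≤ k) {β β' D x : ℕ}
    (hβ : Good k p W β) (hβ' : Good k p W β') (hmod : β' % k ^ p = β % k ^ p) :
    hits k p W D (β' * k ^ D + x) = hits k p W D (β * k ^ D + x) := by
  have hk0 : ∀ e, 0 < k ^ e := fun e => Nat.pow_pos (by omega)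
  unfold hits
  congr 1
  apply Finset.filter_congr
  intro t ht
  have ht := Finset.mem_range.1 ht
  have hdiv : ∀ b, (b * k ^ D + x) / k ^ t = b * k * k ^ (D - t - 1) + x / k ^ t := by
    intro b
    have : b * k ^ D = k ^ t * (b * k * k ^ (D - t - 1)) := by
      have : k ^ D = k ^ t * k * k ^ (D - t - 1) := by
        rw [← pow_succ, ← pow_add]; congr 1; omega
      rw [this]; ring
    rw [this, Nat.mul_add_div (hk0 _)]
  have hm : (β' * k ^ D + x) / k ^ t % k ^ (p + 1) = (β * k ^ D + x) / k ^ t % k ^ (p + 1) := by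
    rw [hdiv, hdiv, pow_succ]
    exact Nat.ModEq.add_right _ (Nat.ModEq.mul_right _ (Nat.ModEq.mul_right' k hmod))
  have hsize : ∀ b, Good k p W b → (b * k ^ D + x) / k ^ t % k ^ (p + 1) = W →
      k ^ p ≤ (b * k ^ D + x) / k ^ t := by
    rintro b (h | h) hb
    · exact h.trans (hb ▸ Nat.mod_le _ _)
    · rw [hdiv]
      calc k ^ p ≤ b * k := by rw [mul_comm]; exact h
        _ ≤ b * k * k ^ (D - t - 1) := Nat.le_mul_of_pos_right _ (hk0 _)
        _ ≤ _ := Nat.le_add_right _ _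
  exact ⟨fun h => ⟨hm ▸ h.1, hsize β hβ (hm ▸ h.1)⟩,
    fun h => ⟨hm.trans h.1, hsize β' hβ' (hm.trans h.1)⟩⟩

/-- If a window lies below a good prefix, the contribution of that prefix can be replaced by any
natural number `c`. -/
theorem IsCount.shift {k p W : ℕ} {s : ℕ → ℕ} (hk : 2 ≤ k) (hs : IsCount k p W s)
    (hW : W < k ^ (p + 1)) {n i D : ℕ} (hD : ∀ j < n, (i + j) / k ^ D = i / k ^ D)
    (hg : Good k p W (i / k ^ D)) (c : ℕ) :
    ∃ i', ∀ j < n, s (i' + j) + s (i / k ^ D) = s (i + j) + c := by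
  have hk0 : ∀ e, 0 < k ^ e := fun e => Nat.pow_pos (by omega)
  obtain ⟨β', h1, h2, h3⟩ := hs.realize hk hW (i / k ^ D) c
  refine ⟨β' * k ^ D + i % k ^ D, fun j hj => ?_⟩
  have hlt := Nat.mod_lt (i + j) (hk0 D)
  have e1 : i + j = i / k ^ D * k ^ D + (i + j) % k ^ D := by
    have := Nat.div_add_mod' (i + j) (k ^ D)
    rw [hD j hj] at this
    exact this.symm
  have e2 : β' * k ^ D + i % k ^ D + j = β' * k ^ D + (i + j) % k ^ D := by
    have := Nat.div_add_mod' i (k ^ D)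
    omega
  have e3 : (β' * k ^ D + (i + j) % k ^ D) / k ^ D = β' := by
    rw [mul_comm, Nat.mul_add_div (hk0 _), Nat.div_eq_of_lt hlt, add_zero]
  rw [e2, hs.eq_add_hits D (β' * k ^ D + (i + j) % k ^ D), hs.eq_add_hits D (i + j), hD j hj, e3,
    h2, hits_congr hk hg h3 h1, ← e1]
  ring

/-! ### Windows with a large letter have a good common prefix -/

/-- If `V` followed by `a` zeros and `V` followed by `b ≠ a` zeros have the same last `q` digits, then
these digits are all `0`: the difference is `k ^ a * V` times a number coprime to `k`. -/
theorem dvd_of_pow_modEq {k q V Z a b : ℕ} (hab : a < b)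
    (ha : k ^ a * V ≡ Z [MOD k ^ q]) (hb : k ^ b * V ≡ Z [MOD k ^ q]) (hk : 2 ≤ k) :
    k ^ q ∣ Z := by
  obtain ⟨d, rfl⟩ := Nat.exists_eq_add_of_lt hab
  have h : k ^ q ∣ (k ^ (d + 1) - 1) * (k ^ a * V) := by
    have := (Nat.modEq_iff_dvd' (by
      exact Nat.mul_le_mul_right _ (Nat.pow_le_pow_right (by omega) (by omega)))).1 (ha.trans hb.symm)
    convert this using 1
    rw [Nat.sub_mul, one_mul, add_assoc, pow_add]
    congr 1; ring
  have hcop : Nat.Coprime (k ^ q) (k ^ (d + 1) - 1) := by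
    apply Nat.Coprime.pow_left
    have h1 : 1 ≤ k ^ (d + 1) := Nat.one_le_pow _ _ (by omega)
    have h2 : Nat.Coprime (k ^ (d + 1)) (k ^ (d + 1) - 1) :=
      (Nat.coprime_self_sub_right h1).2 (Nat.coprime_one_right _)
    exact Nat.Coprime.coprime_dvd_left (dvd_pow_self k (by omega)) h2
  exact (Nat.modEq_zero_iff_dvd.1 (ha.symm.trans
    (Nat.modEq_zero_iff_dvd.2 (hcop.dvd_of_dvd_mul_left h))))

/-- Let `α` end in a run of `t` digits equal to `0` (`ε = 0`) or to `k - 1` (`ε = 1`). If `w` is not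
a power of that digit, then at most one occurrence of `w` ends in this run or in the digit just
before it. -/
theorem hit_unique {k p W ε α t v : ℕ} (hk : 2 ≤ k) (hε : ¬ k ^ (p + 1) ∣ W + ε)
    (hα : ∀ a ≤ t, α / k ^ a + ε = k ^ (t - a) * v) {a b : ℕ} (ha : a ≤ t) (hb : b ≤ t)
    (hA : Hit k p W (α / k ^ a)) (hB : Hit k p W (α / k ^ b)) : a = b := by
  have key : ∀ c ≤ t, Hit k p W (α / k ^ c) → k ^ (t - c) * v ≡ W + ε [MOD k ^ (p + 1)] := by
    intro c hc h
    rw [← hα c hc, ← h.1]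
    exact Nat.ModEq.add_right _ (Nat.mod_modEq _ _).symm
  rcases lt_trichotomy a b with h | h | h
  · exact absurd (dvd_of_pow_modEq (by omega) (key b hb hB) (key a ha hA) hk) hε
  · exact h
  · exact absurd (dvd_of_pow_modEq (by omega) (key a ha hA) (key b hb hB) hk) hε

theorem hits_run_le_one {k p W ε α t v : ℕ} (hk : 2 ≤ k) (hε : ¬ k ^ (p + 1) ∣ W + ε)
    (hα : ∀ a ≤ t, α / k ^ a + ε = k ^ (t - a) * v) : hits k p W (t + 1) α ≤ 1 := by
  unfold hits
  rw [Finset.card_le_one]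
  intro a ha b hb
  simp only [Finset.mem_filter, Finset.mem_range] at ha hb
  exact hit_unique hk hε hα (by omega) (by omega) ha.2 hb.2

/-- When the prefix before the run is too short, the digit following the run can be included in
the range where at most one occurrence of `w` ends. -/
theorem hits_run_succ_le_one {k p W ε α t v x : ℕ} (hk : 2 ≤ k) (hε : ¬ k ^ (p + 1) ∣ W + ε)
    (hε1 : ε ≤ 1)
    (hα : ∀ a ≤ t, α / k ^ a + ε = k ^ (t - a) * v) (hx : x / k = α)
    (hsmall : α / k ^ t < k ^ p) : hits k p W (t + 2) x ≤ 1 := by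
  have hdiv : ∀ a, x / k ^ (a + 1) = α / k ^ a := by
    intro a; rw [← hx, Nat.div_div_eq_div_mul, pow_succ, mul_comm]
  have hkk : k ∣ k ^ (p + 1) := dvd_pow_self k (by omega)
  have key : ∀ a ≤ t, Hit k p W x → ¬ Hit k p W (α / k ^ a) := by
    intro a ha h0 h1
    have hat : a < t := by
      rcases lt_or_eq_of_le ha with h | h
      · exact h
      · rw [h] at h1; exact absurd h1.2 (by omega)
    have hWa : k ^ (t - a) * v ≡ W + ε [MOD k ^ (p + 1)] := by
      rw [← hα a ha, ← h1.1]
      exact Nat.ModEq.add_right _ (Nat.mod_modEq _ _).symm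
    have hWx : x + ε ≡ W + ε [MOD k ^ (p + 1)] := by
      rw [← h0.1]
      exact Nat.ModEq.add_right _ (Nat.mod_modEq _ _).symm
    have hkx : k ∣ x + ε := by
      have h2 : x + ε ≡ k ^ (t - a) * v [MOD k] := (hWx.trans hWa.symm).of_dvd hkk
      exact (Nat.modEq_zero_iff_dvd.1 (h2.trans (Nat.modEq_zero_iff_dvd.2
        ((dvd_pow_self k (by omega)).mul_right v))))
    have hxv : x + ε = k ^ (t + 1) * v := by
      have h3 : α + ε = k ^ t * v := by simpa using hα 0 (by omega)
      obtain ⟨q, hq⟩ := hkx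
      have h4 : q = α + ε := by
        interval_cases ε
        · rw [← hx, ← add_zero x, hq]; simp; rw [Nat.mul_div_cancel_left _ (by omega)]
        · have hq0 : q ≠ 0 := by rintro rfl; omega
          obtain ⟨q', rfl⟩ := Nat.exists_eq_succ_of_ne_zero hq0
          have : x = k * q' + (k - 1) := by
            rw [Nat.succ_eq_add_one, mul_add] at hq; omega
          rw [← hx, this, Nat.mul_add_div (by omega), Nat.div_eq_of_lt (by omega)]
      rw [hq, h4, h3]; ring
    rw [hxv] at hWx
    exact hε (dvd_of_pow_modEq (by omega) hWa hWx hk)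
  unfold hits
  rw [Finset.card_le_one]
  intro a ha b hb
  simp only [Finset.mem_filter, Finset.mem_range] at ha hb
  rcases a with _ | a <;> rcases b with _ | b
  · rfl
  · rw [hdiv] at hb
    exact absurd hb.2 (key b (by omega) (by simpa using ha.2))
  · rw [hdiv] at ha
    exact absurd ha.2 (key a (by omega) (by simpa using hb.2))
  · rw [hdiv] at ha hb
    rw [hit_unique hk hε hα (by omega) (by omega) ha.2 hb.2]

/-- A window of length at most `k ^ L` containing a letter larger than `L` lies below a good prefix,
and the digits below that prefix account for at most `L + 1` occurrences of `w`. -/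
theorem IsCount.exists_prefix {k p W : ℕ} {s : ℕ → ℕ} (hk : 2 ≤ k) (hs : IsCount k p W s)
    (hW0 : 0 < W) (hW : W + 1 < k ^ (p + 1)) {n L i : ℕ} (hn : 1 ≤ n) (hL : n ≤ k ^ L)
    (hbig : ∃ j < n, L + 1 ≤ s (i + j)) :
    ∃ D, (∀ j < n, (i + j) / k ^ D = i / k ^ D) ∧ Good k p W (i / k ^ D) ∧
      ∀ j < n, s (i + j) ≤ s (i / k ^ D) + (L + 1) := by
  have hk0 : ∀ e, 0 < k ^ e := fun e => Nat.pow_pos (by omega)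
  obtain ⟨a, ha⟩ : ∃ a, a = i / k ^ L := ⟨_, rfl⟩
  have hblock : ∀ j < n, (i + j) / k ^ L = a ∨ (i + j) / k ^ L = a + 1 := by
    intro j hj
    have h1 : a ≤ (i + j) / k ^ L := ha ▸ Nat.div_le_div_right (by omega)
    have h2 : (i + j) / k ^ L ≤ a + 1 := by
      rw [ha, ← Nat.add_div_right _ (hk0 L)]
      exact Nat.div_le_div_right (by omega)
    omega
  by_cases hsingle : ∀ j < n, (i + j) / k ^ L = a
  · have hle : ∀ j < n, s (i + j) ≤ s a + L := by
      intro j hj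
      have h1 := hs.eq_add_hits L (i + j)
      have h2 := hits_le k p W L (i + j)
      rw [hsingle j hj] at h1
      omega
    refine ⟨L, fun j hj => by rw [hsingle j hj, ha], ?_, fun j hj => ?_⟩
    · rw [← ha]
      by_contra hng
      have hka : k * a < k ^ p := by unfold Good at hng; omega
      have : s a = 0 := hs.eq_zero (by nlinarith)
      obtain ⟨j, hj, hj'⟩ := hbig
      have := hle j hj
      omega
    · rw [← ha]; have := hle j hj; omega
  · have hL1 : 1 ≤ L := by
      by_contra h0
      have : L = 0 := by omega
      subst this
      apply hsingle
      intro j hj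
      have : j = 0 := by simp at hL; omega
      rw [this, ha, add_zero]
    obtain ⟨t, v, hv, hav⟩ := Nat.exists_eq_pow_mul_and_not_dvd (n := a + 1) (by omega) k (by omega)
    have hndvd : ¬ k ^ (t + 1) ∣ a + 1 := by
      rw [hav, pow_succ]
      intro h
      exact hv (Nat.dvd_of_mul_dvd_mul_left (hk0 t) h)
    -- `a` ends in `t` digits `k - 1`, and `a + 1` in `t` digits `0`
    have hdiv1 : ∀ c ≤ t, (a + 1) / k ^ c + 0 = k ^ (t - c) * v := by
      intro c hc
      have : k ^ t = k ^ c * k ^ (t - c) := by rw [← pow_add]; congr 1; omega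
      rw [add_zero, hav, this, mul_assoc, Nat.mul_div_cancel_left _ (hk0 c)]
    have hdiv0 : ∀ c ≤ t, a / k ^ c + 1 = k ^ (t - c) * v := by
      intro c hc
      rw [← hdiv1 c hc, Nat.succ_div, if_pos (hav ▸ (pow_dvd_pow k hc).mul_right v), add_zero]
    have hE0 : ¬ k ^ (p + 1) ∣ W + 0 := fun h => by
      have := Nat.le_of_dvd (by omega) h; omega
    have hE1 : ¬ k ^ (p + 1) ∣ W + 1 := fun h => by
      have := Nat.le_of_dvd (by omega) h; omega
    obtain ⟨β, hβ⟩ : ∃ β, β = a / k ^ (t + 1) := ⟨_, rfl⟩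
    have hβ1 : (a + 1) / k ^ (t + 1) = β := by rw [Nat.succ_div, if_neg hndvd, add_zero, hβ]
    -- both blocks meeting the window are handled uniformly
    have hrun : ∀ j < n, ∃ ε ≤ 1, ¬ k ^ (p + 1) ∣ W + ε ∧
        (∀ c ≤ t, (i + j) / k ^ L / k ^ c + ε = k ^ (t - c) * v) ∧
        (i + j) / k ^ L / k ^ (t + 1) = β := by
      intro j hj
      rcases hblock j hj with h | h
      · exact ⟨1, le_refl _, hE1, by rw [h]; exact hdiv0, by rw [h, hβ]⟩
      · exact ⟨0, by omega, hE0, by rw [h]; exact hdiv1, by rw [h, hβ1]⟩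
    have hD : ∀ j < n, (i + j) / k ^ (L + (t + 1)) = β := by
      intro j hj
      obtain ⟨ε, -, -, -, h⟩ := hrun j hj
      rw [pow_add, ← Nat.div_div_eq_div_mul, h]
    have hiD : i / k ^ (L + (t + 1)) = β := by simpa using hD 0 (by omega)
    refine ⟨L + (t + 1), fun j hj => by rw [hD j hj, hiD], ?_, fun j hj => ?_⟩
    · rw [hiD]
      by_contra hng
      unfold Good at hng
      push Not at hng
      obtain ⟨hWp, hkβ⟩ := hng
      have hsβ : s β = 0 := hs.eq_zero (by nlinarith)
      have hβp : k * (β + 1) ≤ k ^ p := by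
        rcases p with _ | p
        · rw [pow_zero] at hWp; omega
        · rw [pow_succ'] at hkβ ⊢
          exact Nat.mul_le_mul_left _ (Nat.lt_of_mul_lt_mul_left hkβ)
      obtain ⟨j, hj, hj'⟩ := hbig
      obtain ⟨ε, hε1, hε, hα, hb⟩ := hrun j hj
      obtain ⟨L, rfl⟩ : ∃ M, L = M + 1 := ⟨L - 1, by omega⟩
      have hx : (i + j) / k ^ L / k = (i + j) / k ^ (L + 1) := by
        rw [Nat.div_div_eq_div_mul, pow_succ]
      have hsmall : (i + j) / k ^ (L + 1) / k ^ t < k ^ p := by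
        have : (i + j) / k ^ (L + 1) / k ^ t / k = β := by
          rw [← hb, pow_succ k t, Nat.div_div_eq_div_mul _ (k ^ t) k]
        have h2 := Nat.lt_mul_div_succ ((i + j) / k ^ (L + 1) / k ^ t) (b := k) (by omega)
        rw [this] at h2
        omega
      have h1 := hits_run_succ_le_one hk hε hε1 hα hx hsmall
      have h2 := hs.eq_add_hits L (i + j)
      have h3 := hits_le k p W L (i + j)
      have h4 := hs.eq_add_hits (t + 2) ((i + j) / k ^ L)
      have h5 : (i + j) / k ^ L / k ^ (t + 2) = β := by
        rw [← hb, ← hx, Nat.div_div_eq_div_mul _ k, ← pow_succ']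
      rw [h5] at h4
      omega
    · rw [hiD]
      obtain ⟨ε, hε1, hε, hα, hb⟩ := hrun j hj
      have h1 := hits_run_le_one hk hε hα
      have h2 := hs.eq_add_hits L (i + j)
      have h3 := hits_le k p W L (i + j)
      have h4 := hs.eq_add_hits (t + 1) ((i + j) / k ^ L)
      rw [hb] at h4
      omega

/-! ### Factors and complexity -/

theorem mem_factorSet1 (a : ℕ → ℕ) (n M : ℕ) (u : List ℕ) :
    u ∈ factorSet1 a n (M + 1) ↔ ∃ i, u = (List.range n).map (fun j => a (i + j)) ∧
      (∀ j < n, a (i + j) ≤ M + 1) ∧ ∃ j < n, a (i + j) = M + 1 := by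
  unfold factorSet1 factorSet
  simp only [Set.mem_sdiff, Set.mem_ofPred_eq, Nat.add_sub_cancel]
  constructor
  · rintro ⟨⟨⟨i, rfl⟩, h1⟩, h2⟩
    refine ⟨i, rfl, by simpa using h1, ?_⟩
    by_contra h3
    push Not at h3
    refine h2 ⟨⟨i, rfl⟩, ?_⟩
    simp only [List.mem_map, List.mem_range, forall_exists_index, and_imp,
      forall_apply_eq_imp_iff₂] at h1 ⊢
    intro j hj
    have := h1 j hj
    have := h3 j hj
    omega
  · rintro ⟨i, rfl, h1, j, hj, h2⟩
    refine ⟨⟨⟨i, rfl⟩, by simpa using h1⟩, fun h => ?_⟩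
    have := h.2 (a (i + j)) (by simpa using ⟨j, hj, rfl⟩)
    omega

theorem factorSet_finite (a : ℕ → ℕ) (n N : ℕ) : (factorSet a n N).Finite := by
  have h : (Set.range fun f : Fin n → Fin (N + 1) => List.ofFn fun j => (f j : ℕ)).Finite :=
    Set.finite_range _
  refine h.subset ?_
  rintro u ⟨⟨i, rfl⟩, h⟩
  refine ⟨fun j => ⟨a (i + j), ?_⟩, ?_⟩
  · have := h (a (i + j)) (by simpa using ⟨j, j.2, rfl⟩)
    omega
  · apply List.ext_getElem <;> simp

theorem Pc1_eq_ncard (a : ℕ → ℕ) (n N : ℕ) : Pc1 a n N = ((factorSet1 a n N).ncard : ℤ) := by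
  have hsub : factorSet a n (N - 1) ⊆ factorSet a n N :=
    fun u hu => ⟨hu.1, fun x hx => (hu.2 x hx).trans (Nat.sub_le _ _)⟩
  unfold Pc1 Pc factorSet1
  rw [Nat.card_coe_set_eq, Nat.card_coe_set_eq,
    ← Set.ncard_sdiff_add_ncard_of_subset hsub (factorSet_finite a n N)]
  push_cast; ring

/-- For `M ≥ L`, where `n ≤ k ^ L`, adding `1` to every letter is a bijection between factors with maximal letter `M + 1` and
factors with maximal letter `M + 2`. -/
theorem IsCount.ncard_succ {k p W : ℕ} {s : ℕ → ℕ} (hk : 2 ≤ k) (hs : IsCount k p W s)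
    (hW0 : 0 < W) (hW : W + 1 < k ^ (p + 1)) {n L M : ℕ} (hn : 1 ≤ n) (hL : n ≤ k ^ L)
    (hM : L ≤ M) :
    (factorSet1 s n (M + 2)).ncard = (factorSet1 s n (M + 1)).ncard := by
  have himg : factorSet1 s n (M + 2) = (List.map Nat.succ) '' factorSet1 s n (M + 1) := by
    ext u
    rw [Set.mem_image, mem_factorSet1]
    constructor
    · rintro ⟨i, rfl, h1, j, hj, h2⟩
      obtain ⟨D, hD, hg, hb⟩ := hs.exists_prefix hk hW0 hW hn hL (i := i) ⟨j, hj, by omega⟩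
      obtain ⟨i', hi'⟩ := hs.shift hk (by omega) hD hg (s (i / k ^ D) - 1)
      have h0 := hb j hj
      refine ⟨_, (mem_factorSet1 s n M _).2 ⟨i', rfl, fun q hq => ?_, j, hj, ?_⟩, ?_⟩
      · have := hi' q hq; have := h1 q hq; omega
      · have := hi' j hj; omega
      · rw [List.map_map]
        apply List.map_congr_left
        intro q hq
        have := hi' q (List.mem_range.1 hq)
        simp only [Function.comp, Nat.succ_eq_add_one]
        omega
    · rintro ⟨u, hu, rfl⟩
      obtain ⟨i, rfl, h1, j, hj, h2⟩ := (mem_factorSet1 s n M u).1 hu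
      obtain ⟨D, hD, hg, hb⟩ := hs.exists_prefix hk hW0 hW hn hL (i := i) ⟨j, hj, by omega⟩
      obtain ⟨i', hi'⟩ := hs.shift hk (by omega) hD hg (s (i / k ^ D) + 1)
      refine ⟨i', ?_, fun q hq => ?_, j, hj, ?_⟩
      · rw [List.map_map]
        apply List.map_congr_left
        intro q hq
        have := hi' q (List.mem_range.1 hq)
        simp only [Function.comp, Nat.succ_eq_add_one]
        omega
      · have := hi' q hq; have := h1 q hq; omega
      · have := hi' j hj; omega
  rw [himg, Set.ncard_image_of_injective _ (List.map_injective_iff.2 Nat.succ_injective)]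

/-- The sequence is unbounded, so some factor has a maximal letter larger than `L`. -/
theorem IsCount.exists_nonempty {k p W : ℕ} {s : ℕ → ℕ} (hk : 2 ≤ k) (hs : IsCount k p W s)
    (hW : W + 1 < k ^ (p + 1)) {n : ℕ} (L : ℕ) (hn : 1 ≤ n) :
    ∃ M, L ≤ M ∧ (factorSet1 s n (M + 1)).Nonempty := by
  obtain ⟨i, -, hi, -⟩ := hs.realize hk (by omega) 0 (L + 1)
  obtain ⟨j, hj, hmax⟩ := Finset.exists_max_image (Finset.range n) (fun j => s (i + j))
    ⟨0, Finset.mem_range.2 (by omega)⟩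
  have h0 : s i ≤ s (i + j) := hmax 0 (Finset.mem_range.2 (by omega))
  refine ⟨s (i + j) - 1, by omega, _, (mem_factorSet1 s n _ _).2
    ⟨i, rfl, fun q hq => ?_, j, Finset.mem_range.1 hj, by omega⟩⟩
  have : s (i + q) ≤ s (i + j) := hmax q (Finset.mem_range.2 hq)
  omega

theorem stmt18 (k : ℕ) (hk : 2 ≤ k) (w : List ℕ) (hw : w ≠ []) (hwk : ∀ d ∈ w, d < k)
    (hnp : ¬ ((∀ d ∈ w, d = 0) ∨ (∀ d ∈ w, d = k - 1)))
    (n : ℕ) (hn : 1 ≤ n) (N : ℕ) (hN : Nat.clog k n + 2 ≤ N) :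
    Pc1 (dseq k w) n N = Pc1 (dseq k w) n (Nat.clog k n + 1) ∧
    1 ≤ Pc1 (dseq k w) n N := by
  obtain ⟨hw0, hwk1⟩ := not_or.1 hnp
  obtain ⟨p, hp⟩ : ∃ p, w.length = p + 1 :=
    Nat.exists_eq_succ_of_ne_zero (by simpa using hw)
  have hs : IsCount k p (Nat.ofDigits k w.reverse) (dseq k w) :=
    ⟨dseq_zero k w hw hw0, dseq_step k hk w hw hwk hw0 p hp⟩
  have hW0 : 0 < Nat.ofDigits k w.reverse := ofDigits_pos_of_ne k hk _ (by simpa using hw0)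
  have hW : Nat.ofDigits k w.reverse + 1 < k ^ (p + 1) := by
    have := ofDigits_succ_lt_of_ne k hk w.reverse (by simpa using hwk) (by simpa using hwk1)
    rwa [List.length_reverse, hp] at this
  have hL : n ≤ k ^ Nat.clog k n := Nat.le_pow_clog (by omega) n
  have hconst : ∀ M, Nat.clog k n ≤ M → (factorSet1 (dseq k w) n (M + 1)).ncard
      = (factorSet1 (dseq k w) n (Nat.clog k n + 1)).ncard := by
    intro M hM
    induction M, hM using Nat.le_induction with
    | base => rfl
    | succ M hM ih => rw [← ih]; exact hs.ncard_succ hk hW0 hW hn hL hM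
  obtain ⟨M, hM, hne⟩ := hs.exists_nonempty hk hW (Nat.clog k n) hn
  have hpos : 0 < (factorSet1 (dseq k w) n (M + 1)).ncard :=
    (Set.ncard_pos ((factorSet_finite _ _ _).subset Set.sdiff_subset)).2 hne
  obtain ⟨N, rfl⟩ : ∃ N', N = N' + 1 := ⟨N - 1, by omega⟩
  have hc := hconst N (by omega)
  have hc' := hconst M hM
  rw [Pc1_eq_ncard, Pc1_eq_ncard]
  exact ⟨by rw [hc], by omega⟩
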